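/- Let σ(t) = 1/(1 + e^{−t}) be the sigmoid function. Let w₁, …, w_m ∈ ℝ^{d+1} be such that for each i the linear part (w_{i1}, …, w_{id}) is nonzero, and for i ≠ j neither wᵢ = wⱼ nor wᵢ = −wⱼ. Let q > 0 be a probability density with respect to Lebesgue measure λ_d on ℝ^d with ∫ ‖x‖⁶ q(x) dx < ∞. Then the functions on ℝ^d consisting of the constant function 1, x ↦ x_a x_b σ''(wᵢᵀ x̃) for 1 ≤ a ≤ b ≤ d and 1 ≤ i ≤ m, x ↦ σ''(wᵢᵀ x̃) for 1 ≤ i ≤ m, x ↦ x_a σ'(wᵢᵀ x̃) for 1 ≤ a ≤ d and 1 ≤ i ≤ m, x ↦ σ'(wᵢᵀ x̃) for 1 ≤ i ≤ m, and x ↦ σ(wᵢᵀ x̃) for 1 ≤ i ≤ m, are linearly independent in the Hilbert space L²(q λ_d). -/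

import Mathlib

/-!
The proof looks at the poles of the combination in complexified variables. With `Y = 1 + e^{-t}`
one has `σ = 1/Y`, `σ' = (Y - 1)/Y²` and `σ'' = (Y - 1)(Y - 2)/Y³`, so the combination is
`c + ∑ᵢ Nᵢ/Yᵢ³`, where `Yᵢ` vanishes exactly when `wᵢᵀ x̃` is an odd multiple of `iπ`. Since `q > 0`
and the combination is continuous, it vanishes at every real point, and by the identity theorem for
entire functions the relation with cleared denominators persists at all complex points `x + iy`.
Hence `Nᵢ` vanishes wherever `Yᵢ` does and no other `Yⱼ` does (`numerator_eq_zero`).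

Such points are found as follows. Take `i` with the largest Euclidean norm of `wᵢ` and a generic
real `x` on `wᵢᵀ x̃ = 0`; then `Yⱼ(x + iy) ≠ 0` for every `y` unless `wⱼ = r wᵢ`
(`exists_generic`). In the remaining cases `|r| < 1`, and for the pole `wᵢᵀ x̃ = iπp` with `p` an
odd prime, `Yⱼ` also vanishes only if `rp` is an odd integer, which for each `r` happens for at
most one `p` (`exists_two_primes`). So there are two good primes `p`, and at the corresponding
points the quadratic coefficient of `σ''(wᵢᵀ x̃)` vanishes. A single `p` would not suffice: up to
scaling, `(t² + π²p²) σ''(t)` has only a double pole at `iπp`. Two values of `p` force this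
coefficient to be zero (`quadratic_eq_zero`); the pole order drops, and the same argument gives the
coefficients of `σ'` and then of `σ` (`coeff_eq_zero`). Removing `wᵢ` and repeating in order of
decreasing norm finishes the proof.
-/

open MeasureTheory ProbabilityTheory Filter

noncomputable section

/-- The parameter space of an MLP with `k` hidden units on inputs in `ℝ^d`:
`θ = (β, a, w)` with `β ∈ ℝ`, `a ∈ ℝ^k` and `w ∈ (ℝ^{d+1})^k`. -/
abbrev Param (d k : ℕ) : Type := ℝ × (Fin k → ℝ) × (Fin k → (Fin (d + 1) → ℝ))

/-- `wᵀ x̃` where `x̃ = (1, x₁, …, x_d)`. -/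
def dotT {d : ℕ} (w : Fin (d + 1) → ℝ) (x : Fin d → ℝ) : ℝ :=
  w 0 + ∑ a : Fin d, w a.succ * x a

/-- The MLP regression function `F_θ(x) = β + ∑ i, aᵢ φ(wᵢᵀ x̃)`. -/
def mlp {d k : ℕ} (φ : ℝ → ℝ) (θ : Param d k) (x : Fin d → ℝ) : ℝ :=
  θ.1 + ∑ i : Fin k, θ.2.1 i * φ (dotT (θ.2.2 i) x)

/-- The compact parameter set `Θ_k`: `‖wᵢ‖ ≥ η`, `|aᵢ| ≥ η`, `‖θ‖ ≤ M`
(Euclidean norms, written via squares). -/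
def Theta (d k : ℕ) (η M : ℝ) : Set (Param d k) :=
  {θ | (∀ i : Fin k, η ^ 2 ≤ ∑ a : Fin (d + 1), (θ.2.2 i a) ^ 2 ∧ η ≤ |θ.2.1 i|) ∧
    θ.1 ^ 2 + (∑ i : Fin k, (θ.2.1 i) ^ 2) +
      ∑ i : Fin k, ∑ a : Fin (d + 1), (θ.2.2 i a) ^ 2 ≤ M ^ 2}

/-- The density of `z = (x,y)` under parameter `θ` (Gaussian regression noise,
input density `q`): `f_θ(z) = (2πσ²)^{-1/2} exp(-(y - F_θ(x))²/(2σ²)) q(x)`. -/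
def fdens {d k : ℕ} (φ : ℝ → ℝ) (q : (Fin d → ℝ) → ℝ) (σ2 : ℝ) (θ : Param d k)
    (z : ((Fin d → ℝ) × ℝ)) : ℝ :=
  (Real.sqrt (2 * Real.pi * σ2))⁻¹ * Real.exp (-(z.2 - mlp φ θ z.1) ^ 2 / (2 * σ2)) * q z.1

/-- The law `q λ_d` of the inputs. -/
def muX (d : ℕ) (q : (Fin d → ℝ) → ℝ) : Measure (Fin d → ℝ) :=
  volume.withDensity fun x => ENNReal.ofReal (q x)

/-- The law of `Z = (X,Y)` under the true parameter: density `f = f_{θ⁰}` w.r.t. `λ_{d+1}`. -/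
def lawZ {d k0 : ℕ} (φ : ℝ → ℝ) (q : (Fin d → ℝ) → ℝ) (σ2 : ℝ) (θ0 : Param d k0) :
    Measure ((Fin d → ℝ) × ℝ) :=
  volume.withDensity fun z => ENNReal.ofReal (fdens φ q σ2 θ0 z)

/-- The linear combination of the functions appearing in assumption H-4:
`c·1 + ∑ᵢ (∑_{a≤b} γᵢab x_a x_b) φ''(wᵢ⁰ᵀx̃) + ∑ᵢ δᵢ φ''(wᵢ⁰ᵀx̃)
 + ∑ᵢ (∑_a ζᵢa x_a) φ'(wᵢ⁰ᵀx̃) + ∑ᵢ εᵢ φ'(wᵢ⁰ᵀx̃) + ∑ᵢ αᵢ φ(wᵢ⁰ᵀx̃)`. -/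
def combo {d k0 : ℕ} (φ : ℝ → ℝ) (w0 : Fin k0 → Fin (d + 1) → ℝ) (c : ℝ)
    (γ : Fin k0 → Fin d → Fin d → ℝ) (δ : Fin k0 → ℝ) (ζ : Fin k0 → Fin d → ℝ)
    (ε : Fin k0 → ℝ) (α : Fin k0 → ℝ) (x : Fin d → ℝ) : ℝ :=
  c + (∑ i : Fin k0, (∑ a : Fin d, ∑ b : Fin d, if a ≤ b then γ i a b * x a * x b else 0) *
        deriv (deriv φ) (dotT (w0 i) x))
    + (∑ i : Fin k0, δ i * deriv (deriv φ) (dotT (w0 i) x))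
    + (∑ i : Fin k0, (∑ a : Fin d, ζ i a * x a) * deriv φ (dotT (w0 i) x))
    + (∑ i : Fin k0, ε i * deriv φ (dotT (w0 i) x))
    + ∑ i : Fin k0, α i * φ (dotT (w0 i) x)


/-- The sigmoid transfer function `σ(t) = 1/(1 + e^{-t})`. -/
def sigmoid (t : ℝ) : ℝ := (1 + Real.exp (-t))⁻¹

open scoped Matrix

/-! ### Derivatives of the sigmoid and the normal form of the combination -/

theorem hasDerivAt_sigmoid (t : ℝ) :
    HasDerivAt sigmoid ((1 + Real.exp (-t) - 1) / (1 + Real.exp (-t)) ^ 2) t := by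
  have hpos : (1 + Real.exp (-t)) ≠ 0 := by positivity
  have h1 : HasDerivAt (fun t : ℝ => 1 + Real.exp (-t)) (-Real.exp (-t)) t := by
    simpa using ((hasDerivAt_neg t).exp.const_add 1)
  exact (h1.inv hpos).congr_deriv (by ring)

theorem deriv_sigmoid :
    deriv sigmoid = fun t => (1 + Real.exp (-t) - 1) / (1 + Real.exp (-t)) ^ 2 :=
  funext fun t => (hasDerivAt_sigmoid t).deriv

theorem deriv_deriv_sigmoid :
    deriv (deriv sigmoid) = fun t =>
      (1 + Real.exp (-t) - 1) * (1 + Real.exp (-t) - 2) / (1 + Real.exp (-t)) ^ 3 := by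
  rw [deriv_sigmoid]
  funext t
  have hpos : (1 + Real.exp (-t)) ≠ 0 := by positivity
  have h1 : HasDerivAt (fun t : ℝ => 1 + Real.exp (-t)) (-Real.exp (-t)) t := by
    simpa using ((hasDerivAt_neg t).exp.const_add 1)
  have h2 := (h1.sub_const 1).div (h1.pow 2) (pow_ne_zero 2 hpos)
  refine (h2.congr_deriv ?_).deriv
  simp only [Pi.pow_apply]
  field_simp
  ring

/-- The matrix of the quadratic form `∑_{a ≤ b} g a b x_a x_b`. -/
def upperMat {d : ℕ} (g : Fin d → Fin d → ℝ) : Matrix (Fin d) (Fin d) ℝ :=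
  Matrix.of fun a b => if a ≤ b then g a b else 0

theorem combo_sigmoid {d m : ℕ} (w : Fin m → Fin (d + 1) → ℝ) (c : ℝ)
    (γ : Fin m → Fin d → Fin d → ℝ) (δ : Fin m → ℝ) (ζ : Fin m → Fin d → ℝ)
    (ε : Fin m → ℝ) (α : Fin m → ℝ) (x : Fin d → ℝ) :
    combo sigmoid w c γ δ ζ ε α x = c + ∑ i,
      ((x ⬝ᵥ upperMat (γ i) *ᵥ x + δ i) * (1 + Real.exp (-dotT (w i) x) - 1) *
          (1 + Real.exp (-dotT (w i) x) - 2)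
        + (ζ i ⬝ᵥ x + ε i) * (1 + Real.exp (-dotT (w i) x) - 1) * (1 + Real.exp (-dotT (w i) x))
        + α i * (1 + Real.exp (-dotT (w i) x)) ^ 2) / (1 + Real.exp (-dotT (w i) x)) ^ 3 := by
  have hq : ∀ i, (∑ a : Fin d, ∑ b : Fin d, if a ≤ b then γ i a b * x a * x b else 0)
      = x ⬝ᵥ upperMat (γ i) *ᵥ x := by
    intro i
    simp only [dotProduct, Matrix.mulVec, upperMat, Matrix.of_apply, Finset.mul_sum]
    refine Finset.sum_congr rfl fun a _ => Finset.sum_congr rfl fun b _ => ?_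
    split_ifs <;> ring
  unfold combo
  rw [deriv_deriv_sigmoid, deriv_sigmoid]
  simp only [hq]
  simp only [add_assoc, ← Finset.sum_add_distrib]
  congr 1
  refine Finset.sum_congr rfl fun i _ => ?_
  have hpos : (1 + Real.exp (-dotT (w i) x)) ≠ 0 := by positivity
  simp only [sigmoid, dotProduct]
  field_simp
  ring

theorem combo_sigmoid_continuous {d m : ℕ} (w : Fin m → Fin (d + 1) → ℝ) (c : ℝ)
    (γ : Fin m → Fin d → Fin d → ℝ) (δ : Fin m → ℝ) (ζ : Fin m → Fin d → ℝ)
    (ε : Fin m → ℝ) (α : Fin m → ℝ) :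
    Continuous (combo sigmoid w c γ δ ζ ε α) := by
  rw [funext (combo_sigmoid w c γ δ ζ ε α)]
  have hd : ∀ i, Continuous fun x : Fin d → ℝ => dotT (w i) x := by
    intro i; unfold dotT; fun_prop
  have hm : ∀ i, Continuous fun x : Fin d → ℝ => x ⬝ᵥ upperMat (γ i) *ᵥ x := fun i =>
    continuous_id.dotProduct (continuous_const.matrix_mulVec continuous_id)
  have hz : ∀ i, Continuous fun x : Fin d → ℝ => ζ i ⬝ᵥ x := fun i =>
    continuous_const.dotProduct continuous_id
  refine continuous_const.add (continuous_finsetSum _ fun i _ => ?_)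
  have := hd i
  have := hm i
  have := hz i
  refine Continuous.div (by fun_prop) (by fun_prop) fun x => ?_
  positivity

/-! ### Poles in the complex domain -/

/-- Reading off the residue numerator: if a combination of fractions with entire numerators and
denominators vanishes on the real line, then the numerator over a denominator that vanishes at
`I`, all the others being nonzero there, vanishes at `I`. After clearing denominators this is the
identity theorem for entire functions. -/
theorem numerator_eq_zero {ι : Type*} [DecidableEq ι] (s : Finset ι) (c : ℂ)
    (N Y : ι → ℂ → ℂ) (hN : ∀ j, Differentiable ℂ (N j)) (hY : ∀ j, Differentiable ℂ (Y j))
    (n₀ y₀ : ℂ → ℂ) (hn₀ : Differentiable ℂ n₀) (hy₀ : Differentiable ℂ y₀)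
    (e : ℕ) (he : e ≠ 0)
    (hreal : ∀ t : ℝ, c + (n₀ t / y₀ t ^ e + ∑ j ∈ s, N j t / Y j t ^ 3) = 0)
    (hy₀real : ∀ t : ℝ, y₀ t ≠ 0) (hYreal : ∀ j, ∀ t : ℝ, Y j t ≠ 0)
    (h0 : y₀ Complex.I = 0) (hI : ∀ j ∈ s, Y j Complex.I ≠ 0) : n₀ Complex.I = 0 := by
  set P : ℂ → ℂ := fun z => ∏ j ∈ s, Y j z ^ 3 with hP
  set R : ℂ → ℂ := fun z => ∑ j ∈ s, N j z * ∏ k ∈ s.erase j, Y k z ^ 3 with hR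
  set G : ℂ → ℂ := fun z => n₀ z * P z + y₀ z ^ e * (c * P z + R z) with hG
  have dP : Differentiable ℂ P := by
    refine Differentiable.fun_finsetProd fun j _ => (hY j).pow 3
  have dR : Differentiable ℂ R := by
    refine Differentiable.fun_sum fun j _ => (hN j).mul ?_
    exact Differentiable.fun_finsetProd fun k _ => (hY k).pow 3
  have dG : Differentiable ℂ G := by fun_prop
  have hG0 : ∀ t : ℝ, G t = 0 := by
    intro t
    have hR' : R t = P t * ∑ j ∈ s, N j t / Y j t ^ 3 := by
      simp only [hR, hP, Finset.mul_sum]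
      refine Finset.sum_congr rfl fun j hj => ?_
      rw [← Finset.mul_prod_erase s _ hj]
      have := hYreal j t
      field_simp
    have h1 := hreal t
    have h2 := hy₀real t
    have h3 : n₀ t = y₀ t ^ e * (n₀ t / y₀ t ^ e) := by field_simp
    simp only [hG]
    rw [hR', h3]
    linear_combination (y₀ t ^ e * P t) * h1
  have hGz : G = 0 := by
    refine AnalyticOnNhd.eq_of_frequently_eq (z₀ := 0)
      (fun z _ => dG.analyticAt z) (fun z _ => analyticAt_const) ?_
    have ht : Tendsto (fun t : ℝ => (t : ℂ)) (nhdsWithin 0 {0}ᶜ) (nhdsWithin 0 {0}ᶜ) := by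
      refine tendsto_nhdsWithin_iff.2 ⟨?_, ?_⟩
      · have := Complex.continuous_ofReal.tendsto 0
        simp only [Complex.ofReal_zero] at this
        exact this.mono_left nhdsWithin_le_nhds
      · filter_upwards [self_mem_nhdsWithin] with t ht
        simpa using ht
    exact ht.frequently (Frequently.of_forall fun t => by simp [hG0 t])
  have hGI : G Complex.I = 0 := by rw [hGz]; rfl
  have hPI : P Complex.I ≠ 0 := Finset.prod_ne_zero_iff.2 fun j hj => pow_ne_zero _ (hI j hj)
  simp only [hG, h0, zero_pow he, zero_mul, add_zero] at hGI
  exact (mul_eq_zero.1 hGI).resolve_right hPI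

/-- The zeros of `1 + exp (-(t + i s))` are the points with `t = 0` and `s` an odd multiple
of `π`. -/
theorem one_add_exp_eq_zero {t s : ℝ} (h : 1 + Complex.exp (-(t + Complex.I * s)) = 0) :
    t = 0 ∧ ∃ k : ℤ, s = Real.pi * (2 * k + 1) := by
  have h1 : Complex.exp (-(t + Complex.I * s)) = Complex.exp (Real.pi * Complex.I) := by
    rw [Complex.exp_pi_mul_I]; linear_combination h
  obtain ⟨n, hn⟩ := Complex.exp_eq_exp_iff_exists_int.1 h1
  have hre := congrArg Complex.re hn
  have him := congrArg Complex.im hn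
  simp at hre him
  refine ⟨hre, -n - 1, ?_⟩
  push_cast
  linear_combination -him

theorem one_add_exp_odd (p : ℕ) (hp : Odd p) :
    1 + Complex.exp (-(Complex.I * (Real.pi * p : ℝ))) = 0 := by
  have : -(Complex.I * (Real.pi * p : ℝ)) = -((p : ℂ) * (Real.pi * Complex.I)) := by
    push_cast; ring
  rw [this, Complex.exp_neg, Complex.exp_nat_mul, Complex.exp_pi_mul_I, hp.neg_one_pow]
  norm_num

/-- Two odd primes avoiding every relation `r j * p ∈ 2ℤ + 1` with `|r j| < 1`: each `r j` rules
out at most one prime. -/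
theorem exists_two_primes {m : ℕ} (r : Fin m → ℝ) :
    ∃ p₁ p₂ : ℕ, p₁ ≠ p₂ ∧ ∀ p ∈ ({p₁, p₂} : Set ℕ), 0 < p ∧ Odd p ∧
      ∀ j, |r j| < 1 → ∀ k : ℤ, r j * p ≠ 2 * k + 1 := by
  set bad : Fin m → Set ℕ := fun j => {p | p.Prime ∧ |r j| < 1 ∧ ∃ k : ℤ, r j * p = 2 * k + 1}
    with hbad
  have hfin : ∀ j, (bad j).Finite := by
    intro j
    refine Set.Subsingleton.finite ?_
    rintro p ⟨hp, hr, k, hk⟩ p' ⟨hp', -, k', hk'⟩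
    by_contra hne
    have h1 : ((2 * k + 1 : ℤ) : ℝ) * p' = (2 * k' + 1 : ℤ) * p := by
      push_cast; rw [← hk, ← hk']; ring
    have h2 : (2 * k + 1 : ℤ) * p' = (2 * k' + 1) * p := by exact_mod_cast h1
    have h3 : (p : ℤ) ∣ (2 * k + 1) * p' := ⟨2 * k' + 1, by rw [h2]; ring⟩
    have hcop : IsCoprime (p : ℤ) (p' : ℤ) :=
      Nat.isCoprime_iff_coprime.2 ((Nat.coprime_primes hp hp').2 hne)
    have h4 : (p : ℤ) ∣ 2 * k + 1 := hcop.dvd_of_dvd_mul_right h3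
    have hp0 : (0 : ℝ) < p := by exact_mod_cast hp.pos
    have h5 : |(2 * k + 1 : ℝ)| < p := by
      rw [← hk, abs_mul, abs_of_pos hp0]
      nlinarith
    have h6 : |2 * k + 1| < (p : ℤ) := by exact_mod_cast h5
    have h7 := Int.eq_zero_of_abs_lt_dvd h4 h6
    omega
  have hinf : ({p : ℕ | p.Prime} \ (({2} : Set ℕ) ∪ ⋃ j, bad j)).Infinite :=
    Nat.infinite_setOfPred_prime.sdiff ((Set.finite_singleton 2).union (Set.finite_iUnion hfin))
  obtain ⟨p₁, h₁, p₂, h₂, hne⟩ := hinf.nontrivial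
  refine ⟨p₁, p₂, hne, fun p hp => ?_⟩
  have hp' : p ∈ ({p : ℕ | p.Prime} \ (({2} : Set ℕ) ∪ ⋃ j, bad j)) := by
    rcases hp with rfl | rfl
    · exact h₁
    · exact h₂
  obtain ⟨hpr, hnb⟩ := hp'
  simp only [Set.mem_union, Set.mem_singleton_iff, Set.mem_iUnion, not_or, not_exists] at hnb
  exact ⟨hpr.pos, hpr.odd_of_ne_two hnb.1, fun j hj k hk => hnb.2 j ⟨hpr, hj, k, hk⟩⟩

/-! ### Generic points on a hyperplane -/

theorem exists_orthogonal {n : ℕ} (u v : Fin n → ℝ) (h : ∀ r : ℝ, v ≠ r • u) :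
    ∃ X : Fin n → ℝ, u ⬝ᵥ X = 0 ∧ v ⬝ᵥ X ≠ 0 := by
  by_cases hu : u = 0
  · refine ⟨v, by simp [hu], fun hv => h 0 ?_⟩
    rw [dotProduct_self_eq_zero.1 hv, zero_smul]
  have huu : u ⬝ᵥ u ≠ 0 := fun h => hu (dotProduct_self_eq_zero.1 h)
  set X := v - (u ⬝ᵥ v / u ⬝ᵥ u) • u with hX
  have h1 : u ⬝ᵥ X = 0 := by
    simp only [hX, dotProduct_sub, dotProduct_smul, smul_eq_mul]
    field_simp
    ring
  refine ⟨X, h1, fun h2 => h (u ⬝ᵥ v / u ⬝ᵥ u) ?_⟩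
  have h3 : X ⬝ᵥ X = 0 := by
    nth_rewrite 1 [hX]
    rw [sub_dotProduct, smul_dotProduct, h1, h2]; simp
  exact sub_eq_zero.1 (dotProduct_self_eq_zero.1 h3)

theorem dotT_eq {d : ℕ} (w : Fin (d + 1) → ℝ) (x : Fin d → ℝ) :
    dotT w x = w ⬝ᵥ (Fin.cons 1 x : Fin (d + 1) → ℝ) := by
  simp [dotT, dotProduct, Fin.sum_univ_succ]

/-- On the hyperplane `w iᵀ x̃ = 0` there is a point at which `w jᵀ x̃ ≠ 0` for every `w j` not
proportional to `w i`. It is found in homogeneous coordinates, where the hyperplane at infinity is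
one more proper subspace of `(w i)ᗮ` to avoid. -/
theorem exists_generic {d m : ℕ} (w : Fin m → Fin (d + 1) → ℝ) (i : Fin m)
    (hi : ∃ a : Fin d, w i a.succ ≠ 0) :
    ∃ x : Fin d → ℝ, dotT (w i) x = 0 ∧ ∀ j, (∀ r : ℝ, w j ≠ r • w i) → dotT (w j) x ≠ 0 := by
  classical
  have he : ∀ r : ℝ, (Pi.single 0 1 : Fin (d + 1) → ℝ) ≠ r • w i := by
    intro r hr
    obtain ⟨a, ha⟩ := hi
    have h1 := congrFun hr a.succ
    have h2 := congrFun hr 0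
    simp [ha] at h1
    simp [h1] at h2
  let v : Option (Fin m) → Fin (d + 1) → ℝ := fun o => o.elim (Pi.single 0 1)
    fun j => if ∀ r : ℝ, w j ≠ r • w i then w j else Pi.single 0 1
  have hv : ∀ o, ∀ r : ℝ, v o ≠ r • w i := by
    rintro (_ | j)
    · exact he
    · by_cases hj : ∀ r : ℝ, w j ≠ r • w i
      · simpa only [v, Option.elim, if_pos hj] using hj
      · simpa only [v, Option.elim, if_neg hj] using he
  obtain ⟨X, hXi, hX⟩ := Module.Dual.exists_forall_mem_ne_zero_of_forall_exists
    (LinearMap.ker (dotProductBilin ℝ ℝ (w i))) (fun o => dotProductBilin ℝ ℝ (v o))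
    (fun o => by
      obtain ⟨X, h1, h2⟩ := exists_orthogonal (w i) (v o) (hv o)
      exact ⟨X, h1, h2⟩)
  replace hXi : w i ⬝ᵥ X = 0 := hXi
  replace hX : ∀ o, v o ⬝ᵥ X ≠ 0 := hX
  have hX0 : X 0 ≠ 0 := by simpa [v] using hX none
  have hscale : (Fin.cons 1 (fun a : Fin d => X a.succ / X 0) : Fin (d + 1) → ℝ)
      = (X 0)⁻¹ • X := by
    funext a
    refine Fin.cases ?_ (fun b => ?_) a
    · simp [hX0]
    · simp [div_eq_inv_mul]
  refine ⟨fun a => X a.succ / X 0, ?_, fun j hj => ?_⟩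
  · rw [dotT_eq, hscale, dotProduct_smul, hXi, smul_zero]
  · rw [dotT_eq, hscale, dotProduct_smul]
    have := hX (some j)
    simp only [v, Option.elim, if_pos hj] at this
    exact smul_ne_zero (inv_ne_zero hX0) this

/-! ### Linear and quadratic forms on hyperplanes -/

/-- A linear form that vanishes on a hyperplane not through the origin is zero. -/
theorem linear_eq_zero {d : ℕ} (u ζ : Fin d → ℝ) (hu : u ≠ 0) (k : ℝ) (hk : k ≠ 0)
    (h : ∀ y, u ⬝ᵥ y = k → ζ ⬝ᵥ y = 0) : ζ = 0 := by
  have h1 : ∀ y, u ⬝ᵥ y ≠ 0 → ζ ⬝ᵥ y = 0 := by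
    intro y hy
    have := h ((k / u ⬝ᵥ y) • y) (by simp [dotProduct_smul, hy])
    rw [dotProduct_smul, smul_eq_mul] at this
    exact (mul_eq_zero.1 this).resolve_left (div_ne_zero hk hy)
  have huu : u ⬝ᵥ u ≠ 0 := fun h => hu (dotProduct_self_eq_zero.1 h)
  refine dotProduct_self_eq_zero.1 ?_
  by_cases hz : u ⬝ᵥ ζ = 0
  · have h2 := h1 (ζ + u) (by rw [dotProduct_add, hz, zero_add]; exact huu)
    rwa [dotProduct_add, h1 u huu, add_zero] at h2
  · exact h1 ζ hz

/-- A quadratic form taking one constant value on two parallel hyperplanes at different distances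
from the origin is zero, and so is the constant. One hyperplane is not enough: on
`u ⬝ᵥ y = k` the form `(u ⬝ᵥ y) ^ 2` is constant. -/
theorem quadratic_eq_zero {d : ℕ} (M : Matrix (Fin d) (Fin d) ℝ) (u : Fin d → ℝ) (hu : u ≠ 0)
    (k₁ k₂ K : ℝ) (h₁ : k₁ ≠ 0) (h12 : k₁ ^ 2 ≠ k₂ ^ 2)
    (h : ∀ y, (u ⬝ᵥ y = k₁ ∨ u ⬝ᵥ y = k₂) → y ⬝ᵥ M *ᵥ y = K) :
    K = 0 ∧ ∀ y, y ⬝ᵥ M *ᵥ y = 0 := by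
  have h1 : ∀ y, u ⬝ᵥ y ≠ 0 → y ⬝ᵥ M *ᵥ y = 0 := by
    intro y hy
    have e1 := h ((k₁ / u ⬝ᵥ y) • y) (Or.inl (by simp [dotProduct_smul, hy]))
    have e2 := h ((k₂ / u ⬝ᵥ y) • y) (Or.inr (by simp [dotProduct_smul, hy]))
    simp only [Matrix.mulVec_smul, dotProduct_smul, smul_dotProduct, smul_eq_mul] at e1 e2
    rw [← e2] at e1
    field_simp at e1
    have : (k₁ ^ 2 - k₂ ^ 2) * (y ⬝ᵥ M *ᵥ y) = 0 := by linear_combination e1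
    exact (mul_eq_zero.1 this).resolve_left (sub_ne_zero.2 h12)
  have huu : u ⬝ᵥ u ≠ 0 := fun h => hu (dotProduct_self_eq_zero.1 h)
  constructor
  · have e1 : u ⬝ᵥ ((k₁ / u ⬝ᵥ u) • u) = k₁ := by simp [dotProduct_smul, huu]
    rw [← h _ (Or.inl e1)]
    exact h1 _ (by rwa [e1])
  · intro y
    by_cases hy : u ⬝ᵥ y = 0
    · -- the parallelogram law for `y + u` and `y - u`, both off the hyperplane `u ⬝ᵥ y = 0`
      have e1 := h1 (y + u) (by rw [dotProduct_add, hy, zero_add]; exact huu)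
      have e2 := h1 (y - u) (by rw [dotProduct_sub, hy, zero_sub]; exact neg_ne_zero.2 huu)
      have e3 := h1 u huu
      simp only [Matrix.mulVec_add, Matrix.mulVec_sub, dotProduct_add, dotProduct_sub,
        add_dotProduct, sub_dotProduct] at e1 e2
      linarith
    · exact h1 y hy

theorem upperMat_coeff_eq_zero {d : ℕ} (g : Fin d → Fin d → ℝ)
    (h : ∀ y, y ⬝ᵥ upperMat g *ᵥ y = 0) : ∀ a b, a ≤ b → g a b = 0 := by
  have hd : ∀ a, g a a = 0 := by
    intro a
    simpa [upperMat] using h (Pi.single a 1)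
  intro a b hab
  rcases hab.eq_or_lt with rfl | hlt
  · exact hd a
  · have e := h (Pi.single a 1 + Pi.single b 1)
    simpa [upperMat, Matrix.mulVec_add, hd, hab, not_le.2 hlt] using e

/-! ### Linear independence -/

/-- If the combination over `insert i s` vanishes on `ℝ^d` and `w i` has the largest norm, then all
coefficients belonging to `i` vanish. The poles used are the complex points `x + I y` with `x`
generic on the hyperplane `w iᵀ x̃ = 0` and `L i ⬝ᵥ y = π p`, where `L i` is the linear part of `w i`
and `p` is one of the two primes of `exists_two_primes`. -/
theorem coeff_eq_zero {d m : ℕ} (w : Fin m → Fin (d + 1) → ℝ) (i : Fin m) (s : Finset (Fin m))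
    (his : i ∉ s) (hw_lin : ∀ i, ∃ a : Fin d, w i a.succ ≠ 0)
    (hw_ne : ∀ i j, i ≠ j → w i ≠ w j ∧ w i ≠ -w j)
    (hmax : ∀ j ∈ s, w j ⬝ᵥ w j ≤ w i ⬝ᵥ w i)
    (c : ℝ) (M : Fin m → Matrix (Fin d) (Fin d) ℝ) (δ : Fin m → ℝ) (ζ : Fin m → Fin d → ℝ)
    (ε : Fin m → ℝ) (α : Fin m → ℝ)
    (h : ∀ x : Fin d → ℝ, c + ∑ j ∈ insert i s,
      ((x ⬝ᵥ M j *ᵥ x + δ j) * (1 + Real.exp (-dotT (w j) x) - 1) *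
          (1 + Real.exp (-dotT (w j) x) - 2)
        + (ζ j ⬝ᵥ x + ε j) * (1 + Real.exp (-dotT (w j) x) - 1) * (1 + Real.exp (-dotT (w j) x))
        + α j * (1 + Real.exp (-dotT (w j) x)) ^ 2) / (1 + Real.exp (-dotT (w j) x)) ^ 3 = 0) :
    (∀ y, y ⬝ᵥ M i *ᵥ y = 0) ∧ δ i = 0 ∧ ζ i = 0 ∧ ε i = 0 ∧ α i = 0 := by
  obtain ⟨x, hxi, hxj⟩ := exists_generic w i (hw_lin i)
  have hwi : w i ≠ 0 := by
    obtain ⟨a, ha⟩ := hw_lin i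
    exact fun h0 => ha (by rw [h0]; rfl)
  have hii : 0 < w i ⬝ᵥ w i :=
    lt_of_le_of_ne (by simpa using dotProduct_star_self_nonneg (w i))
      (fun h0 => hwi (dotProduct_self_eq_zero.1 h0.symm))
  -- if `w j` is a multiple of `w i` at all, the factor is `w j ⬝ᵥ w i / w i ⬝ᵥ w i`
  obtain ⟨p₁, p₂, hp12, hp⟩ := exists_two_primes fun j => w j ⬝ᵥ w i / w i ⬝ᵥ w i
  set L : Fin m → Fin d → ℝ := fun j a => w j a.succ with hL
  have hLi : L i ≠ 0 := by
    obtain ⟨a, ha⟩ := hw_lin i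
    exact fun h0 => ha (congrFun h0 a)
  have hdot : ∀ j (y : Fin d → ℝ) (t : ℝ), dotT (w j) (x + t • y) = dotT (w j) x + t * L j ⬝ᵥ y := by
    intro j y t
    have : ∀ z, dotT (w j) z = w j 0 + L j ⬝ᵥ z := fun z => rfl
    rw [this, this, dotProduct_add, dotProduct_smul, smul_eq_mul, add_assoc]
  -- the complexified denominators and coefficients along the line `x + z y`
  let Y : (Fin d → ℝ) → Fin m → ℂ → ℂ := fun y j z =>
    1 + Complex.exp (-((dotT (w j) x : ℝ) + z * (L j ⬝ᵥ y : ℝ)))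
  let A : (Fin d → ℝ) → Fin m → ℂ → ℂ := fun y j z =>
    (x ⬝ᵥ M j *ᵥ x + δ j : ℝ) + z * (x ⬝ᵥ M j *ᵥ y + y ⬝ᵥ M j *ᵥ x : ℝ) + z ^ 2 *
      (y ⬝ᵥ M j *ᵥ y : ℝ)
  let B : (Fin d → ℝ) → Fin m → ℂ → ℂ := fun y j z =>
    (ζ j ⬝ᵥ x + ε j : ℝ) + z * (ζ j ⬝ᵥ y : ℝ)
  let N : (Fin d → ℝ) → Fin m → ℂ → ℂ := fun y j z =>
    A y j z * (Y y j z - 1) * (Y y j z - 2) + B y j z * (Y y j z - 1) * Y y j z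
      + α j * Y y j z ^ 2
  have dY : ∀ y j, Differentiable ℂ (Y y j) := fun y j => by fun_prop
  have dA : ∀ y j, Differentiable ℂ (A y j) := fun y j => by fun_prop
  have dB : ∀ y j, Differentiable ℂ (B y j) := fun y j => by fun_prop
  have dN : ∀ y j, Differentiable ℂ (N y j) := fun y j => by fun_prop
  have hYr : ∀ y j (t : ℝ), Y y j t = (1 + Real.exp (-dotT (w j) (x + t • y)) : ℝ) := by
    intro y j t
    simp only [Y, hdot]
    push_cast
    rfl
  have hAr : ∀ y j (t : ℝ), A y j t =
      ((x + t • y) ⬝ᵥ M j *ᵥ (x + t • y) + δ j : ℝ) := by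
    intro y j t
    simp only [A, Matrix.mulVec_add, Matrix.mulVec_smul, dotProduct_add, dotProduct_smul,
      add_dotProduct, smul_dotProduct, smul_eq_mul]
    push_cast
    ring
  have hBr : ∀ y j (t : ℝ), B y j t = (ζ j ⬝ᵥ (x + t • y) + ε j : ℝ) := by
    intro y j t
    simp only [B, dotProduct_add, dotProduct_smul, smul_eq_mul]
    push_cast
    ring
  have hYne : ∀ y j (t : ℝ), Y y j t ≠ 0 := by
    intro y j t
    rw [hYr, Complex.ofReal_ne_zero]
    positivity
  have hsum : ∀ y (t : ℝ), (c : ℂ) +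
      (N y i t / Y y i t ^ 3 + ∑ j ∈ s, N y j t / Y y j t ^ 3) = 0 := by
    intro y t
    rw [← Finset.sum_insert (f := fun j => N y j t / Y y j t ^ 3) his]
    simp only [N, hYr, hAr, hBr]
    exact_mod_cast h (x + t • y)
  have key : ∀ y, (L i ⬝ᵥ y = Real.pi * p₁ ∨ L i ⬝ᵥ y = Real.pi * p₂) →
      Y y i Complex.I = 0 ∧ ∀ j ∈ s, Y y j Complex.I ≠ 0 := by
    intro y hy
    obtain ⟨p, hpm, hyp⟩ : ∃ p ∈ ({p₁, p₂} : Set ℕ), L i ⬝ᵥ y = Real.pi * p := by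
      rcases hy with hy | hy
      · exact ⟨p₁, by simp, hy⟩
      · exact ⟨p₂, by simp, hy⟩
    obtain ⟨-, hodd, hr⟩ := hp p hpm
    constructor
    · simp only [Y, hxi, hyp, Complex.ofReal_zero, zero_add]
      exact one_add_exp_odd p hodd
    · intro j hj hzero
      obtain ⟨h1, k, hk⟩ := one_add_exp_eq_zero hzero
      have hprop : ∃ r : ℝ, w j = r • w i := by
        by_contra! hne
        exact hxj j hne h1
      obtain ⟨r, hrj⟩ := hprop
      have hji : j ≠ i := fun e => his (e ▸ hj)
      have hratio : w j ⬝ᵥ w i / w i ⬝ᵥ w i = r := by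
        rw [hrj, smul_dotProduct, smul_eq_mul]
        field_simp
      have hr2 : r ^ 2 ≤ 1 := by
        have := hmax j hj
        rw [hrj, smul_dotProduct, dotProduct_smul, smul_eq_mul, smul_eq_mul] at this
        by_contra! h2
        nlinarith
      have hrlt : |r| < 1 := by
        refine lt_of_le_of_ne (abs_le_one_iff_mul_self_le_one.2 (by nlinarith)) fun habs => ?_
        rcases (abs_eq zero_le_one).1 habs with h1 | h1
        · exact (hw_ne j i hji).1 (by rw [hrj, h1, one_smul])
        · exact (hw_ne j i hji).2 (by rw [hrj, h1, neg_one_smul])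
      refine hr j (by rwa [hratio]) k ?_
      have hLj : L j ⬝ᵥ y = r * L i ⬝ᵥ y := by
        have : L j = r • L i := by
          funext a
          simp [hL, hrj]
        rw [this, smul_dotProduct, smul_eq_mul]
      rw [hratio]
      rw [hLj, hyp] at hk
      have := Real.pi_pos.ne'
      refine mul_left_cancel₀ this ?_
      linarith
  have hpi := Real.pi_pos
  have hp1 : (0 : ℝ) < p₁ := by exact_mod_cast (hp p₁ (by simp)).1
  have hp2 : (0 : ℝ) < p₂ := by exact_mod_cast (hp p₂ (by simp)).1
  have hk1 : Real.pi * p₁ ≠ 0 := (mul_pos hpi hp1).ne'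
  have hk12 : (Real.pi * p₁) ^ 2 ≠ (Real.pi * p₂) ^ 2 := by
    intro e
    have e1 := (pow_left_inj₀ (by positivity) (by positivity) two_ne_zero).1 e
    exact hp12 (by exact_mod_cast mul_left_cancel₀ hpi.ne' e1)
  obtain ⟨y₀, hy₀⟩ : ∃ y₀, L i ⬝ᵥ y₀ = Real.pi * p₁ :=
    ⟨(Real.pi * p₁ / L i ⬝ᵥ L i) • L i, by
      have : L i ⬝ᵥ L i ≠ 0 := fun e => hLi (dotProduct_self_eq_zero.1 e)
      simp [dotProduct_smul, this]⟩
  -- the coefficient of the triple pole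
  have hA : ∀ y, (L i ⬝ᵥ y = Real.pi * p₁ ∨ L i ⬝ᵥ y = Real.pi * p₂) →
      y ⬝ᵥ M i *ᵥ y = x ⬝ᵥ M i *ᵥ x + δ i := by
    intro y hy
    obtain ⟨h0, hI⟩ := key y hy
    have := numerator_eq_zero s c (N y) (Y y) (dN y) (dY y) (N y i) (Y y i) (dN y i) (dY y i)
      3 (by norm_num) (hsum y) (hYne y i) (hYne y) h0 hI
    simp only [N, h0] at this
    have hAI : A y i Complex.I = 0 := by linear_combination this / 2
    have := congrArg Complex.re hAI
    simp [A] at this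
    linarith
  obtain ⟨hK, hM⟩ := quadratic_eq_zero (M i) (L i) hLi _ _ _ hk1 hk12 hA
  have hδ : δ i = 0 := by rwa [hM x, zero_add] at hK
  have hA0 : ∀ y (t : ℝ), A y i t = 0 := by
    intro y t
    rw [hAr, hM, hδ]
    simp
  -- the coefficient of the double pole
  have hB : ∀ y, L i ⬝ᵥ y = Real.pi * p₁ → ζ i ⬝ᵥ x + ε i = 0 ∧ ζ i ⬝ᵥ y = 0 := by
    intro y hy
    obtain ⟨h0, hI⟩ := key y (Or.inl hy)
    have hsum2 : ∀ t : ℝ, (c : ℂ) + ((B y i t * (Y y i t - 1) + α i * Y y i t) / Y y i t ^ 2 +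
        ∑ j ∈ s, N y j t / Y y j t ^ 3) = 0 := by
      intro t
      rw [← hsum y t]
      congr 2
      simp only [N, hA0]
      have := hYne y i t
      field_simp
      ring
    have := numerator_eq_zero s c (N y) (Y y) (dN y) (dY y)
      (fun z => B y i z * (Y y i z - 1) + α i * Y y i z) (Y y i) (by fun_prop) (dY y i)
      2 (by norm_num) hsum2 (hYne y i) (hYne y) h0 hI
    simp only [h0] at this
    have hBI : B y i Complex.I = 0 := by linear_combination -this
    have hre := congrArg Complex.re hBI
    have him := congrArg Complex.im hBI
    simp [B] at hre him
    exact ⟨hre, him⟩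
  have hζ : ζ i = 0 := linear_eq_zero (L i) (ζ i) hLi _ hk1 fun y hy => (hB y hy).2
  have hε : ε i = 0 := by simpa [hζ] using (hB y₀ hy₀).1
  have hB0 : ∀ y (t : ℝ), B y i t = 0 := by
    intro y t
    rw [hBr, hζ, hε]
    simp
  refine ⟨hM, hδ, hζ, hε, ?_⟩
  -- the coefficient of the simple pole
  obtain ⟨h0, hI⟩ := key y₀ (Or.inl hy₀)
  have hsum1 : ∀ t : ℝ, (c : ℂ) + ((α i : ℂ) / Y y₀ i t ^ 1 +
      ∑ j ∈ s, N y₀ j t / Y y₀ j t ^ 3) = 0 := by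
    intro t
    rw [← hsum y₀ t]
    congr 2
    simp only [N, hA0, hB0]
    have := hYne y₀ i t
    field_simp
    ring
  have := numerator_eq_zero s c (N y₀) (Y y₀) (dN y₀) (dY y₀) (fun _ => (α i : ℂ)) (Y y₀ i)
    (by fun_prop) (dY y₀ i) 1 (by norm_num) hsum1 (hYne y₀ i) (hYne y₀) h0 hI
  exact_mod_cast this

/-- Assumption H-4 holds for the sigmoid transfer function: if the weight vectors
`w₁, …, w_m` have nonzero linear parts and are pairwise distinct up to sign, and `q > 0`
is a probability density with finite sixth moment, then the functions
`1`, `x_a x_b σ''(wᵢᵀx̃)` (`a ≤ b`), `σ''(wᵢᵀx̃)`, `x_a σ'(wᵢᵀx̃)`, `σ'(wᵢᵀx̃)`, `σ(wᵢᵀx̃)`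
are linearly independent in `L²(qλ_d)`: any linear combination vanishing `qλ_d`-a.e. has all
coefficients zero. -/
theorem sigmoid_H4 (d m : ℕ) (w : Fin m → Fin (d + 1) → ℝ)
    (hw_lin : ∀ i, ∃ a : Fin d, w i a.succ ≠ 0)
    (hw_ne : ∀ i j, i ≠ j → w i ≠ w j ∧ w i ≠ -w j)
    (q : (Fin d → ℝ) → ℝ) (hq_meas : Measurable q) (hq_pos : ∀ x, 0 < q x)
    (hq_one : ∫⁻ x, ENNReal.ofReal (q x) = 1)
    (hq_mom : ∫⁻ x, ENNReal.ofReal (Real.sqrt (∑ a : Fin d, (x a) ^ 2) ^ 6 * q x) < ⊤)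
    (c : ℝ) (γ : Fin m → Fin d → Fin d → ℝ) (δ : Fin m → ℝ) (ζ : Fin m → Fin d → ℝ)
    (ε : Fin m → ℝ) (α : Fin m → ℝ)
    (hcomb : ∀ᵐ x ∂(muX d q), combo sigmoid w c γ δ ζ ε α x = 0) :
    c = 0 ∧ (∀ i a b, a ≤ b → γ i a b = 0) ∧ (∀ i, δ i = 0) ∧ (∀ i a, ζ i a = 0) ∧
      (∀ i, ε i = 0) ∧ (∀ i, α i = 0) := by
  classical
  have hcont := combo_sigmoid_continuous w c γ δ ζ ε α
  have hae : combo sigmoid w c γ δ ζ ε α =ᵐ[volume] fun _ => 0 := by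
    rw [muX, ae_withDensity_iff (by fun_prop)] at hcomb
    filter_upwards [hcomb] with x hx
    exact hx (by simpa using hq_pos x)
  have hzero := Measure.eq_of_ae_eq hae hcont continuous_const
  have main := Finset.induction_on_max_value (fun i => w i ⬝ᵥ w i)
    (motive := fun s : Finset (Fin m) => (∀ x : Fin d → ℝ, c + ∑ j ∈ s,
      ((x ⬝ᵥ upperMat (γ j) *ᵥ x + δ j) * (1 + Real.exp (-dotT (w j) x) - 1) *
          (1 + Real.exp (-dotT (w j) x) - 2)
        + (ζ j ⬝ᵥ x + ε j) * (1 + Real.exp (-dotT (w j) x) - 1) * (1 + Real.exp (-dotT (w j) x))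
        + α j * (1 + Real.exp (-dotT (w j) x)) ^ 2) / (1 + Real.exp (-dotT (w j) x)) ^ 3 = 0) →
      c = 0 ∧ ∀ i ∈ s, (∀ y, y ⬝ᵥ upperMat (γ i) *ᵥ y = 0) ∧ δ i = 0 ∧ ζ i = 0 ∧ ε i = 0 ∧
        α i = 0) Finset.univ
    (fun h => ⟨by simpa using h 0, by simp⟩)
    (fun i s his hmax ih h => by
      have hi := coeff_eq_zero w i s his hw_lin hw_ne hmax c (fun j => upperMat (γ j))
        δ ζ ε α h
      obtain ⟨hM, hδ, hζ, hε, hα⟩ := hi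
      obtain ⟨hc, hs⟩ := ih fun x => by
        have hx := h x
        rw [Finset.sum_insert his, hM, hδ, hζ, hε, hα] at hx
        simpa using hx
      exact ⟨hc, Finset.forall_mem_insert _ _ _ |>.2 ⟨⟨hM, hδ, hζ, hε, hα⟩, hs⟩⟩)
    (fun x => by rw [← combo_sigmoid, hzero])
  obtain ⟨hc, hall⟩ := main
  refine ⟨hc, fun i => upperMat_coeff_eq_zero _ (hall i (Finset.mem_univ i)).1,
    fun i => (hall i (Finset.mem_univ i)).2.1,
    fun i a => congrFun (hall i (Finset.mem_univ i)).2.2.1 a,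
    fun i => (hall i (Finset.mem_univ i)).2.2.2.1,
    fun i => (hall i (Finset.mem_univ i)).2.2.2.2⟩

end
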